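/- arXiv:2402.00480 — 4 statements merged into one kernel-verified Lean document; each statement's English description precedes it below -/
import Mathlib

section
/- Let U ⊆ ℝ³ be open, let σ : U → ℝ^{3×3} be a twice continuously differentiable matrix field, let ν ∈ ℝ, and set τ = (1+ν) σ − ν (tr σ) 𝟙. Then at every point of U: tr(inc τ) = (1−ν) Δ(tr σ) − (1+ν) div Div σ. -/
/-!
Contracting the two Levi-Civita symbols, `Σ_i ε_{ikl} ε_{imn} = δ_{km} δ_{ln} - δ_{kn} δ_{lm}`, gives
`tr (inc τ) = Δ (tr τ) - Σ_{k,l} ∂_k ∂_l τ_{lk}`, and by symmetry of second derivatives the last sum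
is `div Div τ` (`sum_incM_diag`). For `τ = (1+ν) σ - ν (tr σ) 𝟙` one has `tr τ = (1-2ν) tr σ` and
`div Div τ = (1+ν) div Div σ - ν Δ (tr σ)`, whence the formula. The analytic input is that second
partial derivatives at a point are linear on the functions that are `C²` there
(`pd_pd_smul_sub`, `pd_pd_trM`) and that they commute (`pd_pd_comm`).
-/

noncomputable section
open scoped BigOperators
open MeasureTheory

/-- Points of `ℝ³`. -/
abbrev V3 : Type := Fin 3 → ℝ

/-- `k`-th partial derivative of a scalar field on `ℝ³`. -/
noncomputable def pd (k : Fin 3) (f : V3 → ℝ) (x : V3) : ℝ :=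
  fderiv ℝ f x (Pi.single k 1)

/-- Levi-Civita symbol on `Fin 3`. -/
noncomputable def eps3 (i j k : Fin 3) : ℝ :=
  (((j.val : ℝ) - (i.val : ℝ)) * ((k.val : ℝ) - (i.val : ℝ)) * ((k.val : ℝ) - (j.val : ℝ))) / 2

/-- Trace of a matrix field. -/
noncomputable def trM (σ : V3 → Fin 3 → Fin 3 → ℝ) (x : V3) : ℝ := ∑ i, σ x i i

/-- Row-wise divergence of a matrix field: `(Div σ)_i = Σ_j ∂_j σ_{ij}`. -/
noncomputable def DivM (σ : V3 → Fin 3 → Fin 3 → ℝ) (x : V3) (i : Fin 3) : ℝ :=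
  ∑ j, pd j (fun y => σ y i j) x

/-- Divergence of a vector field. -/
noncomputable def divV (v : V3 → Fin 3 → ℝ) (x : V3) : ℝ :=
  ∑ i, pd i (fun y => v y i) x

/-- Laplacian of a scalar field. -/
noncomputable def lapS (f : V3 → ℝ) (x : V3) : ℝ := ∑ k, pd k (pd k f) x

/-- Hessian of a scalar field. -/
noncomputable def hessS (f : V3 → ℝ) (x : V3) (i j : Fin 3) : ℝ := pd i (pd j f) x

/-- Componentwise Laplacian of a matrix field. -/
noncomputable def lapM (σ : V3 → Fin 3 → Fin 3 → ℝ) (x : V3) (i j : Fin 3) : ℝ :=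
  ∑ k, pd k (pd k (fun y => σ y i j)) x

/-- `div Div σ = Σ_{i,j} ∂_i ∂_j σ_{ij}`. -/
noncomputable def divDivM (σ : V3 → Fin 3 → Fin 3 → ℝ) (x : V3) : ℝ :=
  ∑ i, ∑ j, pd i (pd j (fun y => σ y i j)) x

/-- `(sym (D Div σ))_{ij} = (∂_j (Div σ)_i + ∂_i (Div σ)_j)/2`. -/
noncomputable def symDDivM (σ : V3 → Fin 3 → Fin 3 → ℝ) (x : V3) (i j : Fin 3) : ℝ :=
  (pd j (fun y => DivM σ y i) x + pd i (fun y => DivM σ y j) x) / 2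

/-- Symmetrised gradient of a vector field: `(sym D f)_{ij} = (∂_j f_i + ∂_i f_j)/2`. -/
noncomputable def symDV (f : V3 → Fin 3 → ℝ) (x : V3) (i j : Fin 3) : ℝ :=
  (pd j (fun y => f y i) x + pd i (fun y => f y j) x) / 2

/-- Incompatibility operator `(inc σ)_{ij} = Σ ε_{ikl} ε_{jmn} ∂_k ∂_m σ_{ln}`. -/
noncomputable def incM (σ : V3 → Fin 3 → Fin 3 → ℝ) (x : V3) (i j : Fin 3) : ℝ :=
  ∑ k, ∑ l, ∑ m, ∑ n, eps3 i k l * eps3 j m n * pd k (pd m (fun y => σ y l n)) x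

/-- Row-wise curl of a matrix field: `(Curl σ)_{ij} = Σ_{k,l} ε_{jkl} ∂_k σ_{il}`. -/
noncomputable def CurlM (σ : V3 → Fin 3 → Fin 3 → ℝ) (x : V3) (i j : Fin 3) : ℝ :=
  ∑ k, ∑ l, eps3 j k l * pd k (fun y => σ y i l) x

/-- Kronecker delta / identity matrix entry. -/
noncomputable def idd (i j : Fin 3) : ℝ := if i = j then 1 else 0

lemma pd_differentiableAt {f : V3 → ℝ} {x : V3} (hf : ContDiffAt ℝ 2 f x) (m : Fin 3) :
    DifferentiableAt ℝ (pd m f) x := by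
  have h : DifferentiableAt ℝ (fderiv ℝ f) x :=
    (hf.fderiv_right (m := 1) (by norm_num)).differentiableAt (by norm_num)
  exact h.clm_apply (differentiableAt_const _)

lemma eventually_differentiableAt {f : V3 → ℝ} {x : V3} (hf : ContDiffAt ℝ 2 f x) :
    ∀ᶠ y in nhds x, DifferentiableAt ℝ f y :=
  (hf.eventually (by simp)).mono fun _ hy => hy.differentiableAt (by norm_num)

lemma pd_congr {f g : V3 → ℝ} {x : V3} (h : f =ᶠ[nhds x] g) (k : Fin 3) : pd k f x = pd k g x := by
  simp only [pd, h.fderiv_eq]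

lemma pd_smul_sub {f g : V3 → ℝ} {x : V3} (hf : DifferentiableAt ℝ f x)
    (hg : DifferentiableAt ℝ g x) (a b : ℝ) (k : Fin 3) :
    pd k (fun y => a * f y - b * g y) x = a * pd k f x - b * pd k g x := by
  simp only [pd]
  rw [fderiv_fun_sub (hf.const_mul a) (hg.const_mul b), fderiv_const_mul hf, fderiv_const_mul hg]
  simp

lemma pd_pd_smul_sub {f g : V3 → ℝ} {x : V3} (hf : ContDiffAt ℝ 2 f x)
    (hg : ContDiffAt ℝ 2 g x) (a b : ℝ) (k m : Fin 3) :
    pd k (pd m (fun y => a * f y - b * g y)) x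
      = a * pd k (pd m f) x - b * pd k (pd m g) x := by
  have h : pd m (fun y => a * f y - b * g y) =ᶠ[nhds x] fun y => a * pd m f y - b * pd m g y := by
    filter_upwards [eventually_differentiableAt hf, eventually_differentiableAt hg] with y h1 h2
    exact pd_smul_sub h1 h2 a b m
  rw [pd_congr h, pd_smul_sub (pd_differentiableAt hf m) (pd_differentiableAt hg m)]

lemma pd_sum {F : Fin 3 → V3 → ℝ} {x : V3} (hF : ∀ i, DifferentiableAt ℝ (F i) x) (k : Fin 3) :
    pd k (fun y => ∑ i, F i y) x = ∑ i, pd k (F i) x := by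
  simp only [pd]
  rw [fderiv_fun_sum fun i _ => hF i]
  simp

lemma pd_pd_trM {σ : V3 → Fin 3 → Fin 3 → ℝ} {x : V3}
    (hσ : ∀ i j, ContDiffAt ℝ 2 (fun y => σ y i j) x) (k m : Fin 3) :
    pd k (pd m (trM σ)) x = ∑ i, pd k (pd m (fun y => σ y i i)) x := by
  have h : pd m (trM σ) =ᶠ[nhds x] fun y => ∑ i, pd m (fun z => σ z i i) y := by
    filter_upwards [Filter.eventually_all.2 fun i => eventually_differentiableAt (hσ i i)] with y hy
    exact pd_sum hy m
  rw [pd_congr h, pd_sum fun i => pd_differentiableAt (hσ i i) m]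

lemma pd_pd_comm {f : V3 → ℝ} {x : V3} (hf : ContDiffAt ℝ 2 f x) (k m : Fin 3) :
    pd k (pd m f) x = pd m (pd k f) x := by
  have h : DifferentiableAt ℝ (fderiv ℝ f) x :=
    (hf.fderiv_right (m := 1) (by norm_num)).differentiableAt (by norm_num)
  have key : ∀ k m, pd k (pd m f) x
      = fderiv ℝ (fderiv ℝ f) x (Pi.single k 1) (Pi.single m 1) := by
    intro k m
    change fderiv ℝ (fun y => fderiv ℝ f y (Pi.single m 1)) x (Pi.single k 1) = _
    rw [fderiv_clm_apply h (differentiableAt_const _)]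
    simp
  rw [key, key]
  exact hf.isSymmSndFDerivAt (by simp) _ _

lemma sum_eps3_mul_eps3 (k l m n : Fin 3) :
    ∑ i, eps3 i k l * eps3 i m n = idd k m * idd l n - idd k n * idd l m := by
  fin_cases k <;> fin_cases l <;> fin_cases m <;> fin_cases n <;>
    norm_num [eps3, idd, Fin.sum_univ_three]

/-- The trace of the incompatibility is `Δ (tr τ) - div Div τ`, with the Laplacian of the trace
written out in components. -/
lemma sum_incM_diag {τ : V3 → Fin 3 → Fin 3 → ℝ} {x : V3}
    (hτ : ∀ i j, ContDiffAt ℝ 2 (fun y => τ y i j) x) :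
    ∑ i, incM τ x i i = (∑ k, ∑ l, pd k (pd k (fun y => τ y l l)) x) - divDivM τ x := by
  have h1 : ∑ i, incM τ x i i = ∑ k, ∑ l, ∑ m, ∑ n,
      (idd k m * idd l n - idd k n * idd l m) * pd k (pd m (fun y => τ y l n)) x := by
    simp only [incM, ← sum_eps3_mul_eps3, Finset.sum_mul]
    rw [Finset.sum_comm]
    refine Finset.sum_congr rfl fun k _ => ?_
    rw [Finset.sum_comm]
    refine Finset.sum_congr rfl fun l _ => ?_
    rw [Finset.sum_comm]
    refine Finset.sum_congr rfl fun m _ => ?_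
    rw [Finset.sum_comm]
  rw [h1, divDivM, Finset.sum_comm (f := fun i j => pd i (pd j (fun y => τ y i j)) x),
    ← Finset.sum_sub_distrib]
  refine Finset.sum_congr rfl fun k _ => ?_
  rw [← Finset.sum_sub_distrib]
  refine Finset.sum_congr rfl fun l _ => ?_
  rw [pd_pd_comm (hτ l k) l k]
  simp [idd, sub_mul, Finset.sum_sub_distrib]

/-- For a twice continuously differentiable matrix field `σ` on an open `U ⊆ ℝ³` and
`τ = (1+ν) σ − ν (tr σ) 𝟙`, one has
`tr(inc τ) = (1−ν) Δ(tr σ) − (1+ν) div Div σ` at every point of `U`. -/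
theorem trace_of_inc_compliance (U : Set V3) (hU : IsOpen U) (ν : ℝ)
    (σ : V3 → Fin 3 → Fin 3 → ℝ)
    (hσ : ∀ i j, ContDiffOn ℝ 2 (fun x => σ x i j) U) :
    ∀ x ∈ U,
      ∑ i, incM (fun y i' j' => (1 + ν) * σ y i' j' - ν * trM σ y * idd i' j') x i i =
        (1 - ν) * lapS (trM σ) x - (1 + ν) * divDivM σ x := by
  intro x hx
  have hs : ∀ i j, ContDiffAt ℝ 2 (fun y => σ y i j) x := fun i j =>
    (hσ i j).contDiffAt (hU.mem_nhds hx)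
  have ht : ContDiffAt ℝ 2 (trM σ) x := ContDiffAt.sum fun i _ => hs i i
  have hform : (fun (y : V3) (i' j' : Fin 3) => (1 + ν) * σ y i' j' - ν * trM σ y * idd i' j')
      = fun y i' j' => (1 + ν) * σ y i' j' - (ν * idd i' j') * trM σ y := by
    funext y i j
    ring
  rw [hform, sum_incM_diag fun i j =>
    (contDiffAt_const.mul (hs i j)).sub (contDiffAt_const.mul ht)]
  simp only [divDivM, lapS, pd_pd_smul_sub (hs _ _) ht, pd_pd_trM hs]
  simp [Fin.sum_univ_three, idd]
  ring
end
end

section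
/- Skew part of the Curl of a symmetric tensor field: let U ⊆ ℝ³ be open and let σ : U → ℝ^{3×3} be a continuously differentiable symmetric matrix field. Then at every point of U: skw(Curl σ) = (1/2) Anti(Div σ − ∇ tr σ); consequently the Frobenius norm satisfies ‖skw(Curl σ)‖ = (1/√2) ‖Div σ − ∇ tr σ‖ at every point of U. -/
/-!
For indices `i ≠ j`, the difference `(Curl σ)_{ij} - (Curl σ)_{ji}` is a signed sum of first
derivatives of `σ`. By symmetry of `σ` (which passes to derivatives because `U` is open), adding and
subtracting `∂_k σ_{kk}`, with `k` the remaining index, turns it into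
`ε_{ikj} ((Div σ)_k - ∂_k tr σ)`. The norm identity follows since `Anti` scales the squared norm
by `2`: `‖Anti a‖² = 2 ‖a‖²`.
-/

noncomputable section
open scoped BigOperators
open MeasureTheory

/-- Partial derivatives at a point of an open set depend only on the values on that set. -/
lemma pd_congr_of_isOpen {U : Set V3} (hU : IsOpen U) {x : V3} (hx : x ∈ U) {f g : V3 → ℝ}
    (h : ∀ y ∈ U, f y = g y) (k : Fin 3) : pd k f x = pd k g x := by
  have hfg : f =ᶠ[nhds x] g := Filter.eventuallyEq_of_mem (hU.mem_nhds hx) h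
  rw [pd, pd, hfg.fderiv_eq]

lemma pd_trM {σ : V3 → Fin 3 → Fin 3 → ℝ} {x : V3}
    (hd : ∀ i j, DifferentiableAt ℝ (fun y => σ y i j) x) (k : Fin 3) :
    pd k (trM σ) x = ∑ i, pd k (fun y => σ y i i) x := by
  have h : trM σ = fun y => ∑ i, σ y i i := rfl
  simp only [pd, h]
  rw [fderiv_fun_sum fun i _ => hd i i]
  simp

/-- The identity `‖Anti a / 2‖² = ‖a‖² / 2`. -/
lemma sum_sq_half_anti (a : Fin 3 → ℝ) :
    ∑ i, ∑ j, ((1 / 2) * ∑ k, eps3 i k j * a k) ^ 2 = (1 / 2) * ∑ k, a k ^ 2 := by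
  simp only [eps3, Fin.sum_univ_three, Fin.val_zero, Fin.val_one, Fin.val_two]
  push_cast
  ring

/-- **Skew part of the Curl of a symmetric tensor field.** For a C¹ symmetric matrix
field `σ` on an open `U ⊆ ℝ³`: `skw(Curl σ) = (1/2) Anti(Div σ − ∇ tr σ)` at every point,
and consequently `‖skw(Curl σ)‖ = (1/√2) ‖Div σ − ∇ tr σ‖` (Frobenius/Euclidean norms). -/
theorem skw_curl_symmetric (U : Set V3) (hU : IsOpen U)
    (σ : V3 → Fin 3 → Fin 3 → ℝ)
    (hσ : ∀ i j, ContDiffOn ℝ 1 (fun x => σ x i j) U)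
    (hsym : ∀ x ∈ U, ∀ i j, σ x i j = σ x j i) :
    ∀ x ∈ U,
      (∀ i j,
        (CurlM σ x i j - CurlM σ x j i) / 2 =
          (1 / 2) * ∑ k, eps3 i k j * (DivM σ x k - pd k (trM σ) x)) ∧
      Real.sqrt (∑ i, ∑ j, ((CurlM σ x i j - CurlM σ x j i) / 2) ^ 2) =
        (1 / Real.sqrt 2) *
          Real.sqrt (∑ k, (DivM σ x k - pd k (trM σ) x) ^ 2) := by
  intro x hx
  have hd : ∀ i j, DifferentiableAt ℝ (fun y => σ y i j) x := fun i j =>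
    ((hσ i j).differentiableOn one_ne_zero).differentiableAt (hU.mem_nhds hx)
  have hs : ∀ k i j, pd k (fun y => σ y i j) x = pd k (fun y => σ y j i) x :=
    fun k i j => pd_congr_of_isOpen hU hx (fun y hy => hsym y hy i j) k
  have ht : ∀ k, pd k (trM σ) x = ∑ i, pd k (fun y => σ y i i) x :=
    fun k => pd_trM hd k
  have key : ∀ i j, (CurlM σ x i j - CurlM σ x j i) / 2 =
      (1 / 2) * ∑ k, eps3 i k j * (DivM σ x k - pd k (trM σ) x) := by
    intro i j
    simp only [ht, CurlM, DivM, eps3, Fin.sum_univ_three]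
    -- `hs` rewrites towards the upper triangle: only the entries on and above the diagonal are kept as independent unknowns.
    fin_cases i <;> fin_cases j <;> simp [hs _ 1 0, hs _ 2 0, hs _ 2 1] <;> ring
  refine ⟨key, ?_⟩
  simp only [key]
  rw [sum_sq_half_anti, Real.sqrt_mul (by norm_num)]
  simp
end
end

section
/- Upper bound of ‖Dσ‖_{L²} (Lemma): let σ : ℝ³ → ℝ^{3×3} be a smooth, compactly supported, symmetric matrix field and let ε > 0. Then ∫_{ℝ³} ‖Dσ‖² dx ≤ max{2+ε, 1+1/ε} · ∫_{ℝ³} ( ‖Div σ‖² + ‖∇ tr σ‖² + ‖sym(Curl σ)‖² ) dx. -/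
/-!
The inequality holds already with the constant `2 ≤ max (2 + ε) (1 + 1 / ε)`.

Write `t = tr σ` and `N = ∑ ∂_k σ_{il} ∂_l σ_{ik}`. Expanding the product of two Levi-Civita symbols
gives, pointwise for symmetric `σ`,
`‖sym Curl σ‖² = ‖Dσ‖² - N - ½ ‖Div σ‖² + Div σ · ∇t - ½ ‖∇t‖²`, which rearranges to
`2 (‖Div σ‖² + ‖∇t‖² + ‖sym Curl σ‖²) + (N - ‖Div σ‖²) - ‖Dσ‖²
  = ‖sym Curl σ‖² + ½ ‖Div σ + ∇t‖² + ‖∇t‖² ≥ 0` (`grad_sq_le`).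
Integrating two derivatives by parts (`integral_pd_mul_pd_comm`) shows that the null Lagrangian
`N - ‖Div σ‖²` has integral zero, and the bound follows.
-/

noncomputable section
open scoped BigOperators
open MeasureTheory

lemma contDiff_pd (k : Fin 3) {f : V3 → ℝ} (hf : ContDiff ℝ (⊤ : ℕ∞) f) :
    ContDiff ℝ (⊤ : ℕ∞) (pd k f) :=
  (hf.fderiv_right (by simp)).clm_apply contDiff_const

lemma hasCompactSupport_pd (k : Fin 3) {f : V3 → ℝ} (hf : HasCompactSupport f) :
    HasCompactSupport (pd k f) :=
  hf.fderiv_apply (𝕜 := ℝ) _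

lemma pd_comm (k l : Fin 3) {f : V3 → ℝ} (hf : ContDiff ℝ (⊤ : ℕ∞) f) (x : V3) :
    pd k (pd l f) x = pd l (pd k f) x := by
  have hd : DifferentiableAt ℝ (fderiv ℝ f) x :=
    ((hf.fderiv_right (m := (⊤ : ℕ∞)) (by simp)).differentiable (by simp)) x
  have h : ∀ a b : Fin 3, pd a (pd b f) x
      = fderiv ℝ (fderiv ℝ f) x (Pi.single a 1) (Pi.single b 1) := by
    intro a b
    have hb : pd b f = fun y => fderiv ℝ f y (Pi.single b 1) := rfl
    rw [hb, pd, fderiv_clm_apply hd (differentiableAt_const _)]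
    simp
  rw [h, h]
  exact (hf.contDiffAt.isSymmSndFDerivAt (by
    rw [minSmoothness_of_isRCLikeNormedField]
    exact WithTop.coe_le_coe.2 (le_top : (2 : ℕ∞) ≤ ⊤))).eq _ _

lemma integrable_mul_of_smooth {f g : V3 → ℝ} (hf : ContDiff ℝ (⊤ : ℕ∞) f)
    (hg : ContDiff ℝ (⊤ : ℕ∞) g) (hfc : HasCompactSupport f) :
    Integrable (fun x => f x * g x) :=
  (hf.continuous.mul hg.continuous).integrable_of_hasCompactSupport hfc.mul_right

lemma integral_pd_mul {f g : V3 → ℝ} (k : Fin 3) (hf : ContDiff ℝ (⊤ : ℕ∞) f)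
    (hg : ContDiff ℝ (⊤ : ℕ∞) g) (hfc : HasCompactSupport f) :
    ∫ x, pd k f x * g x = -∫ x, f x * pd k g x := by
  have h := integral_mul_fderiv_eq_neg_fderiv_mul_of_integrable (μ := (volume : Measure V3))
    (f := f) (g := g) (v := Pi.single k 1)
    (integrable_mul_of_smooth (contDiff_pd k hf) hg (hasCompactSupport_pd k hfc))
    (integrable_mul_of_smooth hf (contDiff_pd k hg) hfc)
    (integrable_mul_of_smooth hf hg hfc)
    (fun x _ => hf.differentiable (by simp) x) (fun x _ => hg.differentiable (by simp) x)
  have h' : ∫ x, f x * pd k g x = -∫ x, pd k f x * g x := h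
  linarith

/-- Two integrations by parts move both derivatives past each other, so
`∂_k f ∂_l g - ∂_l f ∂_k g` is a null Lagrangian. -/
lemma integral_pd_mul_pd_comm {f g : V3 → ℝ} (k l : Fin 3) (hf : ContDiff ℝ (⊤ : ℕ∞) f)
    (hg : ContDiff ℝ (⊤ : ℕ∞) g) (hfc : HasCompactSupport f) :
    ∫ x, pd k f x * pd l g x = ∫ x, pd l f x * pd k g x := by
  rw [integral_pd_mul k hf (contDiff_pd l hg) hfc, integral_pd_mul l hf (contDiff_pd k hg) hfc]
  simp only [pd_comm k l hg]

/-- The pointwise inequality behind the bound; `d i j k` stands for `∂_k σ_{ij}`. The last sum on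
the right is the null Lagrangian `N - ‖Div σ‖²`. -/
lemma grad_sq_le (d : Fin 3 → Fin 3 → Fin 3 → ℝ) (hd : ∀ i j k, d i j k = d j i k) :
    ∑ i, ∑ j, ∑ k, d i j k ^ 2 ≤
      2 * ((∑ i, (∑ j, d i j j) ^ 2) + (∑ k, (∑ i, d i i k) ^ 2) +
        ∑ i, ∑ j, ((∑ k, ∑ l, eps3 j k l * d i l k + ∑ k, ∑ l, eps3 i k l * d j l k) / 2) ^ 2) +
      ∑ i, ∑ k, ∑ l, (d i l k * d i k l - d i l l * d i k k) := by
  have key : 2 * ((∑ i, (∑ j, d i j j) ^ 2) + (∑ k, (∑ i, d i i k) ^ 2) +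
        ∑ i, ∑ j, ((∑ k, ∑ l, eps3 j k l * d i l k + ∑ k, ∑ l, eps3 i k l * d j l k) / 2) ^ 2) +
      ∑ i, ∑ k, ∑ l, (d i l k * d i k l - d i l l * d i k k) - ∑ i, ∑ j, ∑ k, d i j k ^ 2 =
      ∑ i, ∑ j, ((∑ k, ∑ l, eps3 j k l * d i l k + ∑ k, ∑ l, eps3 i k l * d j l k) / 2) ^ 2 +
      (1 / 2) * ∑ k, ((∑ j, d k j j) + ∑ i, d i i k) ^ 2 + ∑ k, (∑ i, d i i k) ^ 2 := by
    simp only [Fin.sum_univ_three, eps3, Fin.val_zero, Fin.val_one, Fin.val_two,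
      hd 1 0, hd 2 0, hd 2 1]
    push_cast
    ring
  have : 0 ≤ ∑ i, ∑ j, ((∑ k, ∑ l, eps3 j k l * d i l k +
        ∑ k, ∑ l, eps3 i k l * d j l k) / 2) ^ 2 +
      (1 / 2) * ∑ k, ((∑ j, d k j j) + ∑ i, d i i k) ^ 2 + ∑ k, (∑ i, d i i k) ^ 2 := by
    positivity
  linarith

/-- **Upper bound of `‖Dσ‖_{L²}`.** For a smooth, compactly supported, symmetric matrix
field `σ` on `ℝ³` and any `ε > 0`:
`∫ ‖Dσ‖² ≤ max{2+ε, 1+1/ε} ∫ (‖Div σ‖² + ‖∇ tr σ‖² + ‖sym Curl σ‖²)`. -/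
theorem grad_L2_upper_bound
    (σ : V3 → Fin 3 → Fin 3 → ℝ)
    (hσ : ContDiff ℝ (⊤ : ℕ∞) σ) (hc : HasCompactSupport σ)
    (hsym : ∀ x, ∀ i j, σ x i j = σ x j i)
    (ε : ℝ) (hε : 0 < ε) :
    (∫ x : V3, ∑ i, ∑ j, ∑ k, (pd k (fun y => σ y i j) x) ^ 2) ≤
      max (2 + ε) (1 + 1 / ε) *
        ∫ x : V3, ((∑ i, (DivM σ x i) ^ 2) + (∑ i, (pd i (trM σ) x) ^ 2) +
          ∑ i, ∑ j, ((CurlM σ x i j + CurlM σ x j i) / 2) ^ 2) := by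
  have hs : ∀ i j, ContDiff ℝ (⊤ : ℕ∞) (fun y => σ y i j) := fun i j =>
    contDiff_pi.1 (contDiff_pi.1 hσ i) j
  have hsc : ∀ i j, HasCompactSupport (fun y => σ y i j) := fun i j =>
    hc.comp_left (g := fun m : Fin 3 → Fin 3 → ℝ => m i j) rfl
  have htr : ∀ k x, pd k (trM σ) x = ∑ i, pd k (fun y => σ y i i) x := by
    intro k x
    have h : trM σ = fun y => ∑ i, σ y i i := rfl
    rw [h, pd, fderiv_fun_sum fun i _ => (hs i i).differentiable (by simp) x]
    simp [pd]
  simp only [htr, DivM, CurlM]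
  set d : V3 → Fin 3 → Fin 3 → Fin 3 → ℝ := fun x i j k => pd k (fun y => σ y i j) x with hd
  have hdsym : ∀ x i j k, d x i j k = d x j i k := by
    intro x i j k
    simp only [hd, fun y => hsym y i j]
  have hdcont : Continuous d := by
    refine continuous_pi fun i => continuous_pi fun j => continuous_pi fun k => ?_
    exact (contDiff_pd k (hs i j)).continuous
  have hdsupp : HasCompactSupport d := by
    refine HasCompactSupport.intro hc fun x hx => ?_
    ext i j k
    have hx' : x ∉ tsupport (fun y => σ y i j) := fun h => hx
      (closure_mono (Function.support_comp_subset
        (g := fun m : Fin 3 → Fin 3 → ℝ => m i j) rfl σ) h)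
    have h0 : fderiv ℝ (fun y => σ y i j) x = 0 :=
      Function.notMem_support.1 fun h => hx' (support_fderiv_subset ℝ h)
    simp [hd, pd, h0]
  -- Every integrand is a polynomial without constant term in the entries of `d`.
  have hint : ∀ Q : (Fin 3 → Fin 3 → Fin 3 → ℝ) → ℝ, Continuous Q → Q 0 = 0 →
      Integrable (fun x => Q (d x)) := fun Q hQ h0 =>
    (hQ.comp hdcont).integrable_of_hasCompactSupport (hdsupp.comp_left h0)
  have hI1 := hint (fun d => ∑ i, ∑ j, ∑ k, d i j k ^ 2) (by fun_prop) (by simp)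
  have hI2 := hint (fun d => (∑ i, (∑ j, d i j j) ^ 2) + (∑ k, (∑ i, d i i k) ^ 2) +
    ∑ i, ∑ j, ((∑ k, ∑ l, eps3 j k l * d i l k + ∑ k, ∑ l, eps3 i k l * d j l k) / 2) ^ 2)
    (by fun_prop) (by simp)
  have hI3 := hint (fun d => ∑ i, ∑ k, ∑ l, (d i l k * d i k l - d i l l * d i k k))
    (by fun_prop) (by simp)
  have hP : ∀ i j k l m n, Integrable (fun x => d x i j k * d x l m n) := fun i j k l m n =>
    hint (fun d => d i j k * d l m n) (by fun_prop) (by simp)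
  have hnull : ∫ x, ∑ i, ∑ k, ∑ l, (d x i l k * d x i k l - d x i l l * d x i k k) = 0 := by
    have hD : ∀ i k l, Integrable (fun x => d x i l k * d x i k l - d x i l l * d x i k k) :=
      fun i k l => (hP _ _ _ _ _ _).sub (hP _ _ _ _ _ _)
    rw [integral_finsetSum _ fun i _ => integrable_finsetSum _ fun k _ =>
      integrable_finsetSum _ fun l _ => hD i k l]
    refine Finset.sum_eq_zero fun i _ => ?_
    rw [integral_finsetSum _ fun k _ => integrable_finsetSum _ fun l _ => hD i k l]
    refine Finset.sum_eq_zero fun k _ => ?_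
    rw [integral_finsetSum _ fun l _ => hD i k l]
    refine Finset.sum_eq_zero fun l _ => ?_
    rw [integral_sub (hP _ _ _ _ _ _) (hP _ _ _ _ _ _), sub_eq_zero]
    exact integral_pd_mul_pd_comm k l (hs i l) (hs i k) (hsc i l)
  have hmono := integral_mono hI1 ((hI2.const_mul 2).add hI3)
    (fun x => grad_sq_le (d x) (hdsym x))
  have hadd := integral_add (hI2.const_mul 2) hI3
  simp only [Pi.add_apply] at hmono
  rw [hadd, hnull, add_zero, integral_const_mul] at hmono
  refine hmono.trans (mul_le_mul_of_nonneg_right ?_ (integral_nonneg fun x => ?_))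
  · exact le_max_of_le_left (by linarith)
  · simp only [Pi.zero_apply]
    positivity
end
end

section
/- Planar integration-by-parts identity: let σ : ℝ² → ℝ^{2×2} be a smooth, compactly supported, symmetric matrix field. Then ∫_{ℝ²} ‖Dσ‖² dx = 2 ∫_{ℝ²} ‖Div σ‖² dx − 2 ∫_{ℝ²} ⟨Div σ, ∇ tr σ⟩ dx + ∫_{ℝ²} ‖∇ tr σ‖² dx. -/
/-!
Write `a = σ₁₁`, `b = σ₁₂ = σ₂₁`, `c = σ₂₂`. Expanding both sides pointwise, the integrand on the
right minus the one on the left is `2 (∂₁a ∂₂b - ∂₂a ∂₁b) + 2 (∂₁b ∂₂c - ∂₂b ∂₁c)`, a sum of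
Jacobian determinants. A Jacobian determinant of compactly supported smooth functions has zero
integral (`integral_pd2_mul_swap`): integrate by parts twice and use the symmetry of second
derivatives.
-/

noncomputable section
open scoped BigOperators
open MeasureTheory

/-- Points of `ℝ²`. -/
abbrev V2 : Type := Fin 2 → ℝ

/-- `k`-th partial derivative of a scalar field on `ℝ²`. -/
noncomputable def pd2 (k : Fin 2) (f : V2 → ℝ) (x : V2) : ℝ :=
  fderiv ℝ f x (Pi.single k 1)

/-- Trace of a 2×2 matrix field. -/
noncomputable def trM2 (σ : V2 → Fin 2 → Fin 2 → ℝ) (x : V2) : ℝ := ∑ i, σ x i i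

/-- Row-wise divergence: `(Div σ)_i = Σ_j ∂_j σ_{ij}`. -/
noncomputable def DivM2 (σ : V2 → Fin 2 → Fin 2 → ℝ) (x : V2) (i : Fin 2) : ℝ :=
  ∑ j, pd2 j (fun y => σ y i j) x

/-- Laplacian of a scalar field on `ℝ²`. -/
noncomputable def lapS2 (f : V2 → ℝ) (x : V2) : ℝ := ∑ k, pd2 k (pd2 k f) x

/-- Hessian of a scalar field on `ℝ²`. -/
noncomputable def hessS2 (f : V2 → ℝ) (x : V2) (i j : Fin 2) : ℝ := pd2 i (pd2 j f) x

/-- Componentwise Laplacian of a 2×2 matrix field. -/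
noncomputable def lapM2 (σ : V2 → Fin 2 → Fin 2 → ℝ) (x : V2) (i j : Fin 2) : ℝ :=
  ∑ k, pd2 k (pd2 k (fun y => σ y i j)) x

/-- `div Div σ = Σ_{i,j} ∂_i ∂_j σ_{ij}`. -/
noncomputable def divDivM2 (σ : V2 → Fin 2 → Fin 2 → ℝ) (x : V2) : ℝ :=
  ∑ i, ∑ j, pd2 i (pd2 j (fun y => σ y i j)) x

/-- `(sym (D Div σ))_{ij} = (∂_j (Div σ)_i + ∂_i (Div σ)_j)/2`. -/
noncomputable def symDDivM2 (σ : V2 → Fin 2 → Fin 2 → ℝ) (x : V2) (i j : Fin 2) : ℝ :=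
  (pd2 j (fun y => DivM2 σ y i) x + pd2 i (fun y => DivM2 σ y j) x) / 2

/-- Row-wise rotated divergence: `(Rot σ)_i = ∂₁ σ_{i2} − ∂₂ σ_{i1}`. -/
noncomputable def RotM2 (σ : V2 → Fin 2 → Fin 2 → ℝ) (x : V2) (i : Fin 2) : ℝ :=
  pd2 0 (fun y => σ y i 1) x - pd2 1 (fun y => σ y i 0) x

/-- Rotated gradient `∇⊥λ = (∂₂ λ, −∂₁ λ)`. -/
noncomputable def perpGrad (f : V2 → ℝ) (x : V2) : Fin 2 → ℝ :=
  ![pd2 1 f x, -(pd2 0 f x)]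

/-- Action of the rotation matrix `R = [[0,1],[−1,0]]` on a vector. -/
noncomputable def rotR (v : Fin 2 → ℝ) : Fin 2 → ℝ := ![v 1, -(v 0)]

/-- Kronecker delta / 2×2 identity matrix entry. -/
noncomputable def idd2 (i j : Fin 2) : ℝ := if i = j then 1 else 0

theorem contDiff_pd2 {f : V2 → ℝ} (hf : ContDiff ℝ (⊤ : ℕ∞) f) (k : Fin 2) :
    ContDiff ℝ (⊤ : ℕ∞) (pd2 k f) := by
  have h : ContDiff ℝ (⊤ : ℕ∞) (fderiv ℝ f) := hf.fderiv_right (by simp)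
  exact h.clm_apply contDiff_const

theorem hasCompactSupport_pd2 {f : V2 → ℝ} (hf : HasCompactSupport f) (k : Fin 2) :
    HasCompactSupport (pd2 k f) :=
  hf.fderiv_apply (𝕜 := ℝ) (Pi.single k 1)

theorem pd2_comm {f : V2 → ℝ} (hf : ContDiff ℝ (⊤ : ℕ∞) f) (k l : Fin 2) (x : V2) :
    pd2 k (pd2 l f) x = pd2 l (pd2 k f) x := by
  have h : ContDiff ℝ (⊤ : ℕ∞) (fderiv ℝ f) := hf.fderiv_right (by simp)
  have hd : DifferentiableAt ℝ (fderiv ℝ f) x := h.differentiable (by simp) x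
  have key (m n : Fin 2) : pd2 m (pd2 n f) x
      = fderiv ℝ (fderiv ℝ f) x (Pi.single m 1) (Pi.single n 1) := by
    change fderiv ℝ (fun y => fderiv ℝ f y (Pi.single n 1)) x (Pi.single m 1) = _
    rw [fderiv_clm_apply hd (differentiableAt_const _)]
    simp
  rw [key, key]
  exact ((hf.of_le (m := 2) (WithTop.coe_le_coe.2 le_top)).contDiffAt.isSymmSndFDerivAt (by simp)) _ _

theorem integrable_mul_of_compact {f g : V2 → ℝ} (hf : Continuous f) (hg : Continuous g)
    (hfc : HasCompactSupport f) : Integrable (fun x => f x * g x) :=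
  (hf.mul hg).integrable_of_hasCompactSupport hfc.mul_right

theorem integral_mul_pd2 {f g : V2 → ℝ} (hf : ContDiff ℝ (⊤ : ℕ∞) f)
    (hg : ContDiff ℝ (⊤ : ℕ∞) g) (hfc : HasCompactSupport f) (k : Fin 2) :
    ∫ x, f x * pd2 k g x = - ∫ x, pd2 k f x * g x :=
  integral_mul_fderiv_eq_neg_fderiv_mul_of_integrable
    (integrable_mul_of_compact (contDiff_pd2 hf k).continuous hg.continuous
      (hasCompactSupport_pd2 hfc k))
    (integrable_mul_of_compact hf.continuous (contDiff_pd2 hg k).continuous hfc)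
    (integrable_mul_of_compact hf.continuous hg.continuous hfc)
    (fun x _ => hf.differentiable (by simp) x) (fun x _ => hg.differentiable (by simp) x)

/-- The Jacobian determinant of `(f, g)` has zero integral: moving `∂ₖ` off `f` and then `∂ₗ` back
onto it exchanges the two derivatives. -/
theorem integral_pd2_mul_swap {f g : V2 → ℝ} (hf : ContDiff ℝ (⊤ : ℕ∞) f)
    (hg : ContDiff ℝ (⊤ : ℕ∞) g) (hfc : HasCompactSupport f) (k l : Fin 2) :
    ∫ x, pd2 k f x * pd2 l g x = ∫ x, pd2 l f x * pd2 k g x := by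
  have h1 := integral_mul_pd2 hf (contDiff_pd2 hg l) hfc k
  have h2 := integral_mul_pd2 hf (contDiff_pd2 hg k) hfc l
  simp only [pd2_comm hg k l] at h1
  linarith

/-- **Planar integration-by-parts identity.** For a smooth, compactly supported,
symmetric 2×2 matrix field `σ` on `ℝ²`:
`∫ ‖Dσ‖² = 2∫‖Div σ‖² − 2∫⟨Div σ, ∇ tr σ⟩ + ∫‖∇ tr σ‖²`. -/
theorem planar_grad_L2_identity
    (σ : V2 → Fin 2 → Fin 2 → ℝ)
    (hσ : ContDiff ℝ (⊤ : ℕ∞) σ) (hc : HasCompactSupport σ)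
    (hsym : ∀ x, ∀ i j, σ x i j = σ x j i) :
    (∫ x : V2, ∑ i, ∑ j, ∑ k, (pd2 k (fun y => σ y i j) x) ^ 2) =
      2 * (∫ x : V2, ∑ i, (DivM2 σ x i) ^ 2)
        - 2 * (∫ x : V2, ∑ i, DivM2 σ x i * pd2 i (trM2 σ) x)
        + (∫ x : V2, ∑ i, (pd2 i (trM2 σ) x) ^ 2) := by
  have hs (i j : Fin 2) : ContDiff ℝ (⊤ : ℕ∞) (fun y => σ y i j) :=
    contDiff_pi.1 (contDiff_pi.1 hσ i) j
  have hcs (i j : Fin 2) : HasCompactSupport (fun y => σ y i j) :=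
    hc.comp_left (g := fun m : Fin 2 → Fin 2 → ℝ => m i j) rfl
  have hI (i j k i' j' k' : Fin 2) :
      Integrable (fun x => pd2 k (fun y => σ y i j) x * pd2 k' (fun y => σ y i' j') x) :=
    integrable_mul_of_compact (contDiff_pd2 (hs i j) k).continuous
      (contDiff_pd2 (hs i' j') k').continuous (hasCompactSupport_pd2 (hcs i j) k)
  have htr (k : Fin 2) (x : V2) : pd2 k (trM2 σ) x
      = pd2 k (fun y => σ y 0 0) x + pd2 k (fun y => σ y 1 1) x := by
    have e : trM2 σ = fun y => σ y 0 0 + σ y 1 1 := by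
      funext y; simp [trM2, Fin.sum_univ_two]
    rw [e]
    unfold pd2
    rw [fderiv_fun_add ((hs 0 0).differentiable (by simp) x)
      ((hs 1 1).differentiable (by simp) x)]
    rfl
  have hb : (fun y => σ y 1 0) = fun y => σ y 0 1 := funext fun y => hsym y 1 0
  have J1 := integral_pd2_mul_swap (hs 0 0) (hs 0 1) (hcs 0 0) 0 1
  have J2 := integral_pd2_mul_swap (hs 0 1) (hs 1 1) (hcs 0 1) 0 1
  simp only [DivM2, htr, Fin.sum_univ_two, hb]
  have I1 := hI 0 0 0 0 1 1
  have I2 := hI 0 0 1 0 1 0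
  have I3 := hI 0 1 0 1 1 1
  have I4 := hI 0 1 1 1 1 0
  have cont (i j k : Fin 2) : Continuous (pd2 k (fun y => σ y i j)) :=
    (contDiff_pd2 (hs i j) k).continuous
  have cs (i j k : Fin 2) : HasCompactSupport (pd2 k (fun y => σ y i j)) :=
    hasCompactSupport_pd2 (hcs i j) k
  have hprod (i j k i' j' k' p q r p' q' r' : Fin 2) : Integrable (fun x =>
      (pd2 k (fun y => σ y i j) x + pd2 k' (fun y => σ y i' j') x)
        * (pd2 r (fun y => σ y p q) x + pd2 r' (fun y => σ y p' q') x)) :=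
    integrable_mul_of_compact ((cont i j k).add (cont i' j' k'))
      ((cont p q r).add (cont p' q' r')) ((cs i j k).add (cs i' j' k'))
  have IA := (hprod 0 0 0 0 1 1 0 0 0 0 1 1).add (hprod 0 1 0 1 1 1 0 1 0 1 1 1)
  have IB := (hprod 0 0 0 0 1 1 0 0 0 1 1 0).add (hprod 0 1 0 1 1 1 0 0 1 1 1 1)
  have IC := (hprod 0 0 0 1 1 0 0 0 0 1 1 0).add (hprod 0 0 1 1 1 1 0 0 1 1 1 1)
  -- The left integrand is the right one minus twice the two Jacobian determinants.
  have hsplit := integral_sub (((IA.const_mul 2).sub (IB.const_mul 2)).add IC)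
    (((I1.sub I2).add (I3.sub I4)).const_mul 2)
  rw [integral_add' ((IA.const_mul 2).sub (IB.const_mul 2)) IC,
    integral_sub' (IA.const_mul 2) (IB.const_mul 2), integral_const_mul, integral_const_mul,
    integral_const_mul, integral_add' (I1.sub I2) (I3.sub I4), integral_sub' I1 I2,
    integral_sub' I3 I4, J1, J2, sub_self, sub_self, add_zero, mul_zero, sub_zero] at hsplit
  simp only [Pi.add_apply, Pi.sub_apply] at hsplit
  simp only [sq]
  rw [← hsplit]
  congr 1
  funext x
  ring
end
end
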